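/- arXiv:2109.10881 — 3 statements merged into one kernel-verified Lean document; each statement's English description precedes it below -/
import Mathlib

section
/- Let Ω ⊆ ℍ be a domain, θ ∈ [0,2π), and u, v ∈ ℍ. Define ${}_{u−v}^θ𝒮[f](z) := e^{⟨u−v,z⟩_θ} f(z)$. Then: (i) if f ∈ ${}_{λ^θ_u}𝒜(Ω)$ then ${}_{u−v}^θ𝒮[f] ∈ {}_{λ^θ_v}𝒜(Ω)$; (ii) ${}_{u−v}^θ𝒮 : {}_{λ^θ_u}𝒜(Ω) → {}_{λ^θ_v}𝒜(Ω)$ is a bijection with inverse ${}_{v−u}^θ𝒮$; (iii) for all f, g ∈ ${}_{λ^θ_u}𝒜(Ω)$, $∫_Ω \overline{{}_{u−v}^θ𝒮[f]}\;{}_{u−v}^θ𝒮[g]\;e^{2⟨v,ζ⟩_θ}dμ_ζ = ∫_Ω \bar f\,g\;e^{2⟨u,ζ⟩_θ}dμ_ζ$, i.e. ${}_{u−v}^θ𝒮$ is an isometric isomorphism of the weighted Bergman spaces. -/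
open MeasureTheory

noncomputable section

/-- The real quaternions `ℍ`. -/
abbrev H4 : Type := Quaternion ℝ

instance : MeasurableSpace H4 := borel _
instance : BorelSpace H4 := ⟨rfl⟩

/-- The quaternion unit `i`. -/
def qI : H4 := ⟨0, 1, 0, 0⟩
/-- The quaternion unit `j`. -/
def qJ : H4 := ⟨0, 0, 1, 0⟩
/-- `e^{iθ} = cos θ + (sin θ) i` as a quaternion. -/
def eIθ (θ : ℝ) : H4 := ⟨Real.cos θ, Real.sin θ, 0, 0⟩
/-- The basis direction `i e^{iθ} j`. -/
def e2 (θ : ℝ) : H4 := qI * eIθ θ * qJ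
/-- The basis direction `e^{iθ} j`. -/
def e3 (θ : ℝ) : H4 := eIθ θ * qJ

/-- Third θ-coordinate of a quaternion `z = x₀ + x₁ i + x₂ (i e^{iθ} j) + x₃ (e^{iθ} j)`. -/
def x2θ (θ : ℝ) (z : H4) : ℝ := -z.imJ * Real.sin θ + z.imK * Real.cos θ
/-- Fourth θ-coordinate of a quaternion. -/
def x3θ (θ : ℝ) (z : H4) : ℝ := z.imJ * Real.cos θ + z.imK * Real.sin θ

/-- The θ-inner product `⟨u,z⟩_θ`: the dot product of θ-coordinates. -/
def innerθ (θ : ℝ) (u z : H4) : ℝ :=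
  u.re * z.re + u.imI * z.imI + x2θ θ u * x2θ θ z + x3θ θ u * x3θ θ z

/-- Left θ-Cauchy–Riemann operator
`{}^θ𝒟 f = ∂f/∂x₀ + i ∂f/∂x₁ + (i e^{iθ} j) ∂f/∂x₂ + (e^{iθ} j) ∂f/∂x₃`. -/
def Dl (θ : ℝ) (f : H4 → H4) (z : H4) : H4 :=
  fderiv ℝ f z 1 + qI * fderiv ℝ f z qI + e2 θ * fderiv ℝ f z (e2 θ) +
    e3 θ * fderiv ℝ f z (e3 θ)

/-- Left (θ,u)-Cauchy–Riemann operator `{}^θ_u𝒟 f = {}^θ𝒟 f + u f`. -/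
def Dlu (θ : ℝ) (u : H4) (f : H4 → H4) (z : H4) : H4 := Dl θ f z + u * f z

/-- Right θ-Cauchy–Riemann operator. -/
def Dr (θ : ℝ) (f : H4 → H4) (z : H4) : H4 :=
  fderiv ℝ f z 1 + fderiv ℝ f z qI * qI + fderiv ℝ f z (e2 θ) * e2 θ +
    fderiv ℝ f z (e3 θ) * e3 θ

/-- Right (θ,u)-Cauchy–Riemann operator `{}^θ𝒟_{r,u} f = {}^θ𝒟_r f + f u`. -/
def Dru (θ : ℝ) (u : H4) (f : H4 → H4) (z : H4) : H4 := Dr θ f z + f z * u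

/-- Embedding of ℂ into the quaternions, `ℂ ≅ ℝ + ℝi ⊂ ℍ`. -/
def toH (a : ℂ) : H4 := ⟨a.re, a.im, 0, 0⟩

/-- First complex θ-component of a quaternion: `z₁ = x₀ + x₁ i`. -/
def c1 (z : H4) : ℂ := ⟨z.re, z.imI⟩
/-- Second complex θ-component of a quaternion: `z₂ = x₂ + x₃ i`. -/
def c2 (θ : ℝ) (z : H4) : ℂ := ⟨x2θ θ z, x3θ θ z⟩

/-- Wirtinger operator `∂/∂z̄₁ = ∂/∂x₀ + i ∂/∂x₁` on ℂ-valued functions. -/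
def db1 (f : H4 → ℂ) (z : H4) : ℂ := fderiv ℝ f z 1 + Complex.I * fderiv ℝ f z qI
/-- Wirtinger operator `∂/∂z̄₂ = ∂/∂x₂ + i ∂/∂x₃` on ℂ-valued functions. -/
def db2 (θ : ℝ) (f : H4 → ℂ) (z : H4) : ℂ :=
  fderiv ℝ f z (e2 θ) + Complex.I * fderiv ℝ f z (e3 θ)
/-- Wirtinger operator `∂/∂z₂ = ∂/∂x₂ − i ∂/∂x₃` on ℂ-valued functions. -/
def dz2 (θ : ℝ) (f : H4 → ℂ) (z : H4) : ℂ :=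
  fderiv ℝ f z (e2 θ) - Complex.I * fderiv ℝ f z (e3 θ)

/-- `e^{iθ}` as a complex number. -/
def cexpI (θ : ℝ) : ℂ := ⟨Real.cos θ, Real.sin θ⟩

/-- The weighted Bergman space `{}_{λ^θ_u}𝒜(Ω)`: C¹ null solutions of `{}^θ_u𝒟` with
`∫_Ω |f|² e^{2⟨u,·⟩_θ} dμ < ∞`. -/
def memLA (θ : ℝ) (u : H4) (Ω : Set H4) (f : H4 → H4) : Prop :=
  ContDiffOn ℝ 1 f Ω ∧ (∀ z ∈ Ω, Dlu θ u f z = 0) ∧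
    IntegrableOn (fun z => ‖f z‖ ^ 2 * Real.exp (2 * innerθ θ u z)) Ω volume

/-- The multiplication operator `{}_w^θ𝒮[f](z) = e^{⟨w,z⟩_θ} f(z)`. -/
def Sop (θ : ℝ) (w : H4) (f : H4 → H4) (z : H4) : H4 := Real.exp (innerθ θ w z) • f z

/-- `⟨w,·⟩_θ` as a continuous linear map. -/
def innerCLM (θ : ℝ) (w : H4) : H4 →L[ℝ] ℝ :=
  LinearMap.toContinuousLinearMap
    { toFun := innerθ θ w
      map_add' := by intro a b; simp [innerθ, x2θ, x3θ]; ring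
      map_smul' := by intro a b; simp [innerθ, x2θ, x3θ]; ring }

theorem innerCLM_apply (θ : ℝ) (w z : H4) : innerCLM θ w z = innerθ θ w z := rfl

theorem innerθ_sub (θ : ℝ) (u v z : H4) :
    innerθ θ (u - v) z = innerθ θ u z - innerθ θ v z := by
  simp [innerθ, x2θ, x3θ]; ring

set_option linter.unusedSimpArgs false

theorem cmp_qI_re : qI.re = 0 := rfl
theorem cmp_qI_imI : qI.imI = 1 := rfl
theorem cmp_qI_imJ : qI.imJ = 0 := rfl
theorem cmp_qI_imK : qI.imK = 0 := rfl
theorem cmp_qJ_re : qJ.re = 0 := rfl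
theorem cmp_qJ_imI : qJ.imI = 0 := rfl
theorem cmp_qJ_imJ : qJ.imJ = 1 := rfl
theorem cmp_qJ_imK : qJ.imK = 0 := rfl
theorem cmp_one_re : (1 : H4).re = 1 := rfl
theorem cmp_one_imI : (1 : H4).imI = 0 := rfl
theorem cmp_one_imJ : (1 : H4).imJ = 0 := rfl
theorem cmp_one_imK : (1 : H4).imK = 0 := rfl
theorem cmp_eI_re (θ : ℝ) : (eIθ θ).re = Real.cos θ := rfl
theorem cmp_eI_imI (θ : ℝ) : (eIθ θ).imI = Real.sin θ := rfl
theorem cmp_eI_imJ (θ : ℝ) : (eIθ θ).imJ = 0 := rfl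
theorem cmp_eI_imK (θ : ℝ) : (eIθ θ).imK = 0 := rfl
theorem cmp_e2_re (θ : ℝ) : (e2 θ).re = 0 := by
  simp [e2, e3, Quaternion.re_mul, cmp_qI_re, cmp_qI_imI, cmp_qI_imJ, cmp_qI_imK, cmp_qJ_re, cmp_qJ_imI, cmp_qJ_imJ, cmp_qJ_imK, cmp_one_re, cmp_one_imI, cmp_one_imJ, cmp_one_imK, cmp_eI_re, cmp_eI_imI, cmp_eI_imJ, cmp_eI_imK]
theorem cmp_e2_imI (θ : ℝ) : (e2 θ).imI = 0 := by
  simp [e2, e3, Quaternion.imI_mul, cmp_qI_re, cmp_qI_imI, cmp_qI_imJ, cmp_qI_imK, cmp_qJ_re, cmp_qJ_imI, cmp_qJ_imJ, cmp_qJ_imK, cmp_one_re, cmp_one_imI, cmp_one_imJ, cmp_one_imK, cmp_eI_re, cmp_eI_imI, cmp_eI_imJ, cmp_eI_imK]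
theorem cmp_e2_imJ (θ : ℝ) : (e2 θ).imJ = -Real.sin θ := by
  simp [e2, e3, Quaternion.imJ_mul, cmp_qI_re, cmp_qI_imI, cmp_qI_imJ, cmp_qI_imK, cmp_qJ_re, cmp_qJ_imI, cmp_qJ_imJ, cmp_qJ_imK, cmp_one_re, cmp_one_imI, cmp_one_imJ, cmp_one_imK, cmp_eI_re, cmp_eI_imI, cmp_eI_imJ, cmp_eI_imK]
theorem cmp_e2_imK (θ : ℝ) : (e2 θ).imK = Real.cos θ := by
  simp [e2, e3, Quaternion.imK_mul, cmp_qI_re, cmp_qI_imI, cmp_qI_imJ, cmp_qI_imK, cmp_qJ_re, cmp_qJ_imI, cmp_qJ_imJ, cmp_qJ_imK, cmp_one_re, cmp_one_imI, cmp_one_imJ, cmp_one_imK, cmp_eI_re, cmp_eI_imI, cmp_eI_imJ, cmp_eI_imK]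
theorem cmp_e3_re (θ : ℝ) : (e3 θ).re = 0 := by
  simp [e2, e3, Quaternion.re_mul, cmp_qI_re, cmp_qI_imI, cmp_qI_imJ, cmp_qI_imK, cmp_qJ_re, cmp_qJ_imI, cmp_qJ_imJ, cmp_qJ_imK, cmp_one_re, cmp_one_imI, cmp_one_imJ, cmp_one_imK, cmp_eI_re, cmp_eI_imI, cmp_eI_imJ, cmp_eI_imK]
theorem cmp_e3_imI (θ : ℝ) : (e3 θ).imI = 0 := by
  simp [e2, e3, Quaternion.imI_mul, cmp_qI_re, cmp_qI_imI, cmp_qI_imJ, cmp_qI_imK, cmp_qJ_re, cmp_qJ_imI, cmp_qJ_imJ, cmp_qJ_imK, cmp_one_re, cmp_one_imI, cmp_one_imJ, cmp_one_imK, cmp_eI_re, cmp_eI_imI, cmp_eI_imJ, cmp_eI_imK]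
theorem cmp_e3_imJ (θ : ℝ) : (e3 θ).imJ = Real.cos θ := by
  simp [e2, e3, Quaternion.imJ_mul, cmp_qI_re, cmp_qI_imI, cmp_qI_imJ, cmp_qI_imK, cmp_qJ_re, cmp_qJ_imI, cmp_qJ_imJ, cmp_qJ_imK, cmp_one_re, cmp_one_imI, cmp_one_imJ, cmp_one_imK, cmp_eI_re, cmp_eI_imI, cmp_eI_imJ, cmp_eI_imK]
theorem cmp_e3_imK (θ : ℝ) : (e3 θ).imK = Real.sin θ := by
  simp [e2, e3, Quaternion.imK_mul, cmp_qI_re, cmp_qI_imI, cmp_qI_imJ, cmp_qI_imK, cmp_qJ_re, cmp_qJ_imI, cmp_qJ_imJ, cmp_qJ_imK, cmp_one_re, cmp_one_imI, cmp_one_imJ, cmp_one_imK, cmp_eI_re, cmp_eI_imI, cmp_eI_imJ, cmp_eI_imK]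

theorem innerθ_recon (θ : ℝ) (w : H4) :
    innerθ θ w 1 • (1 : H4) + innerθ θ w qI • qI + innerθ θ w (e2 θ) • e2 θ
      + innerθ θ w (e3 θ) • e3 θ = w := by
  have h := Real.sin_sq_add_cos_sq θ
  have hre : (innerθ θ w 1 • (1 : H4) + innerθ θ w qI • qI + innerθ θ w (e2 θ) • e2 θ
      + innerθ θ w (e3 θ) • e3 θ).re = w.re := by
    simp only [Quaternion.re_add, Quaternion.re_smul, smul_eq_mul, innerθ, x2θ, x3θ, cmp_qI_re, cmp_qI_imI, cmp_qI_imJ, cmp_qI_imK, cmp_qJ_re, cmp_qJ_imI, cmp_qJ_imJ, cmp_qJ_imK, cmp_one_re, cmp_one_imI, cmp_one_imJ, cmp_one_imK, cmp_e2_re, cmp_e2_imI, cmp_e2_imJ, cmp_e2_imK, cmp_e3_re, cmp_e3_imI, cmp_e3_imJ, cmp_e3_imK]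
    ring
  have himI : (innerθ θ w 1 • (1 : H4) + innerθ θ w qI • qI + innerθ θ w (e2 θ) • e2 θ
      + innerθ θ w (e3 θ) • e3 θ).imI = w.imI := by
    simp only [Quaternion.imI_add, Quaternion.imI_smul, smul_eq_mul, innerθ, x2θ, x3θ, cmp_qI_re, cmp_qI_imI, cmp_qI_imJ, cmp_qI_imK, cmp_qJ_re, cmp_qJ_imI, cmp_qJ_imJ, cmp_qJ_imK, cmp_one_re, cmp_one_imI, cmp_one_imJ, cmp_one_imK, cmp_e2_re, cmp_e2_imI, cmp_e2_imJ, cmp_e2_imK, cmp_e3_re, cmp_e3_imI, cmp_e3_imJ, cmp_e3_imK]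
    ring
  have himJ : (innerθ θ w 1 • (1 : H4) + innerθ θ w qI • qI + innerθ θ w (e2 θ) • e2 θ
      + innerθ θ w (e3 θ) • e3 θ).imJ = w.imJ := by
    simp only [Quaternion.imJ_add, Quaternion.imJ_smul, smul_eq_mul, innerθ, x2θ, x3θ, cmp_qI_re, cmp_qI_imI, cmp_qI_imJ, cmp_qI_imK, cmp_qJ_re, cmp_qJ_imI, cmp_qJ_imJ, cmp_qJ_imK, cmp_one_re, cmp_one_imI, cmp_one_imJ, cmp_one_imK, cmp_e2_re, cmp_e2_imI, cmp_e2_imJ, cmp_e2_imK, cmp_e3_re, cmp_e3_imI, cmp_e3_imJ, cmp_e3_imK]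
    linear_combination (w.imJ * (Real.sin θ ^ 2 + Real.cos θ ^ 2 + 1)) * h
  have himK : (innerθ θ w 1 • (1 : H4) + innerθ θ w qI • qI + innerθ θ w (e2 θ) • e2 θ
      + innerθ θ w (e3 θ) • e3 θ).imK = w.imK := by
    simp only [Quaternion.imK_add, Quaternion.imK_smul, smul_eq_mul, innerθ, x2θ, x3θ, cmp_qI_re, cmp_qI_imI, cmp_qI_imJ, cmp_qI_imK, cmp_qJ_re, cmp_qJ_imI, cmp_qJ_imJ, cmp_qJ_imK, cmp_one_re, cmp_one_imI, cmp_one_imJ, cmp_one_imK, cmp_e2_re, cmp_e2_imI, cmp_e2_imJ, cmp_e2_imK, cmp_e3_re, cmp_e3_imI, cmp_e3_imJ, cmp_e3_imK]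
    linear_combination (w.imK * (Real.sin θ ^ 2 + Real.cos θ ^ 2 + 1)) * h
  exact Quaternion.ext _ _ hre himI himJ himK

theorem contDiff_exp_inner (θ : ℝ) (w : H4) :
    ContDiff ℝ 1 (fun z => Real.exp (innerθ θ w z)) :=
  (innerCLM θ w).contDiff.exp

theorem fderiv_Sop (θ : ℝ) (w : H4) (f : H4 → H4) (z : H4) (hf : DifferentiableAt ℝ f z)
    (h : H4) : fderiv ℝ (Sop θ w f) z h =
      Real.exp (innerθ θ w z) • (fderiv ℝ f z h + innerθ θ w h • f z) := by
  have h1 : HasFDerivAt (fun z => Real.exp (innerθ θ w z))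
      (Real.exp (innerθ θ w z) • innerCLM θ w) z := (innerCLM θ w).hasFDerivAt.exp
  have h2 := (h1.smul hf.hasFDerivAt).fderiv
  have h3 : fderiv ℝ (Sop θ w f) z = _ := h2
  rw [h3]
  simp [innerCLM_apply, smul_smul]

theorem Dl_Sop (θ : ℝ) (w : H4) (f : H4 → H4) (z : H4) (hf : DifferentiableAt ℝ f z) :
    Dl θ (Sop θ w f) z = Real.exp (innerθ θ w z) • (Dl θ f z + w * f z) := by
  have hr : w * f z = (innerθ θ w 1 • (1 : H4) + innerθ θ w qI • qI
      + innerθ θ w (e2 θ) • e2 θ + innerθ θ w (e3 θ) • e3 θ) * f z := by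
    rw [innerθ_recon]
  rw [hr]
  simp only [Dl, fderiv_Sop θ w f z hf, mul_smul_comm, mul_add, add_mul, smul_mul_assoc,
    smul_add, one_mul]
  abel

theorem memLA_Sop (Ω : Set H4) (hΩo : IsOpen Ω) (θ : ℝ) (u v : H4) (f : H4 → H4)
    (hf : memLA θ u Ω f) : memLA θ v Ω (Sop θ (u - v) f) := by
  obtain ⟨h1, h2, h3⟩ := hf
  refine ⟨(contDiff_exp_inner θ (u - v)).contDiffOn.smul h1, ?_, ?_⟩
  · intro z hz
    have hd : DifferentiableAt ℝ f z :=
      (h1.differentiableOn one_ne_zero).differentiableAt (hΩo.mem_nhds hz)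
    have h := h2 z hz
    rw [Dlu] at h ⊢
    rw [Dl_Sop θ _ f z hd, Sop, mul_smul_comm, ← smul_add]
    have : Dl θ f z + (u - v) * f z + v * f z = Dl θ f z + u * f z := by
      rw [sub_mul]; abel
    rw [this, h, smul_zero]
  · convert h3 using 2 with z
    rw [Sop, norm_smul, Real.norm_eq_abs, Real.abs_exp, innerθ_sub, mul_pow, ← Real.exp_nat_mul,
      mul_right_comm, ← Real.exp_add, mul_comm]
    congr 2
    push_cast; ring

/-- `{}_{u−v}^θ𝒮` is an isometric isomorphism `{}_{λ^θ_u}𝒜(Ω) → {}_{λ^θ_v}𝒜(Ω)`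
with inverse `{}_{v−u}^θ𝒮`. -/
theorem statement9 (Ω : Set H4) (hΩo : IsOpen Ω) (hΩc : IsConnected Ω)
    (θ : ℝ) (hθ : θ ∈ Set.Ico 0 (2 * Real.pi)) (u v : H4) :
    (∀ f : H4 → H4, memLA θ u Ω f → memLA θ v Ω (Sop θ (u - v) f)) ∧
    (∀ g : H4 → H4, memLA θ v Ω g → memLA θ u Ω (Sop θ (v - u) g)) ∧
    (∀ f : H4 → H4, Sop θ (v - u) (Sop θ (u - v) f) = f) ∧
    (∀ f g : H4 → H4, memLA θ u Ω f → memLA θ u Ω g →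
      (∫ ζ in Ω, Real.exp (2 * innerθ θ v ζ) •
          (star (Sop θ (u - v) f ζ) * Sop θ (u - v) g ζ))
        = ∫ ζ in Ω, Real.exp (2 * innerθ θ u ζ) • (star (f ζ) * g ζ)) := by
  refine ⟨memLA_Sop Ω hΩo θ u v, memLA_Sop Ω hΩo θ v u, ?_, ?_⟩
  · intro f
    funext z
    rw [Sop, Sop, smul_smul, ← Real.exp_add, innerθ_sub, innerθ_sub]
    simp
  · intro f g _ _
    congr 1
    funext z
    rw [Sop, Sop, Quaternion.star_smul, smul_mul_assoc, mul_smul_comm, smul_smul, smul_smul,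
      ← Real.exp_add, ← Real.exp_add, innerθ_sub]
    congr 2
    ring

end
end

section
/- Let Ω ⊆ ℍ be a domain, θ ∈ [0,2π), and u, v ∈ ℍ. Suppose $K_u : Ω × Ω → ℍ$ is a reproducing kernel for ${}_{λ^θ_u}𝒜(Ω)$, i.e., $f(z) = ∫_Ω K_u(z,ζ)\,f(ζ)\,e^{2⟨u,ζ⟩_θ}dμ_ζ$ for all f ∈ ${}_{λ^θ_u}𝒜(Ω)$ and all z ∈ Ω. Then $K_v(z,ζ) := e^{⟨u−v,\,z+ζ⟩_θ}\,K_u(z,ζ)$ is a reproducing kernel for ${}_{λ^θ_v}𝒜(Ω)$: for all f ∈ ${}_{λ^θ_v}𝒜(Ω)$ and all z ∈ Ω, $f(z) = ∫_Ω K_v(z,ζ)\,f(ζ)\,e^{2⟨v,ζ⟩_θ}dμ_ζ$. -/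
open MeasureTheory

noncomputable section

/-- The θ-inner product as a continuous linear functional. -/
def innerL (θ : ℝ) (w : H4) : H4 →L[ℝ] ℝ :=
  LinearMap.toContinuousLinearMap
    { toFun := fun z => innerθ θ w z
      map_add' := by
        intro a b
        simp [innerθ, x2θ, x3θ]
        ring
      map_smul' := by
        intro a b
        simp [innerθ, x2θ, x3θ]
        ring }

theorem innerL_apply (θ : ℝ) (w z : H4) : innerL θ w z = innerθ θ w z := rfl

theorem innerθ_sub_left (θ : ℝ) (a b z : H4) :
    innerθ θ (a - b) z = innerθ θ a z - innerθ θ b z := by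
  simp [innerθ, x2θ, x3θ]
  ring

theorem innerθ_add_right (θ : ℝ) (a y z : H4) :
    innerθ θ a (y + z) = innerθ θ a y + innerθ θ a z := (innerL θ a).map_add y z

theorem e3_eq (θ : ℝ) : e3 θ = (⟨0, 0, Real.cos θ, Real.sin θ⟩ : H4) := by
  unfold e3 eIθ qJ
  refine (QuaternionAlgebra.mk_mul_mk ..).trans ?_
  congr 1 <;> simp

theorem e2_eq (θ : ℝ) : e2 θ = (⟨0, 0, -Real.sin θ, Real.cos θ⟩ : H4) := by
  have : e2 θ = qI * e3 θ := mul_assoc _ _ _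
  rw [this, e3_eq]
  unfold qI
  refine (QuaternionAlgebra.mk_mul_mk ..).trans ?_
  congr 1 <;> simp

theorem Dl_exp_smul (θ : ℝ) (w : H4) (f : H4 → H4) (z : H4) (hf : DifferentiableAt ℝ f z) :
    Dl θ (fun y => Real.exp (innerθ θ w y) • f y) z =
      Real.exp (innerθ θ w z) • (Dl θ f z + w * f z) := by
  have hE : HasFDerivAt (fun y => Real.exp (innerθ θ w y))
      (Real.exp (innerθ θ w z) • innerL θ w) z := (innerL θ w).hasFDerivAt.exp
  have hD := (hE.smul hf.hasFDerivAt).fderiv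
  have key : ∀ h : H4, fderiv ℝ (fun y => Real.exp (innerθ θ w y) • f y) z h =
      Real.exp (innerθ θ w z) • (fderiv ℝ f z h + innerθ θ w h • f z) := by
    intro h
    have := congrArg (fun T : H4 →L[ℝ] H4 => T h) hD
    refine this.trans ?_
    simp [innerL_apply, smul_add, smul_smul]
  have hw : w * f z = innerθ θ w 1 • f z + qI * (innerθ θ w qI • f z)
      + e2 θ * (innerθ θ w (e2 θ) • f z) + e3 θ * (innerθ θ w (e3 θ) • f z) := by
    conv_lhs => rw [← innerθ_recon θ w]
    simp only [add_mul, smul_mul_assoc, mul_smul_comm, one_mul]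
  unfold Dl
  rw [hw]
  simp only [key, mul_smul_comm, mul_add, smul_add]
  abel

theorem memLA_transfer (Ω : Set H4) (hΩo : IsOpen Ω) (θ : ℝ) (u v : H4) (f : H4 → H4)
    (hf : memLA θ v Ω f) :
    memLA θ u Ω (fun y => Real.exp (innerθ θ (v - u) y) • f y) := by
  obtain ⟨h1, h2, h3⟩ := hf
  refine ⟨?_, ?_, ?_⟩
  · have : ContDiff ℝ 1 (fun y => Real.exp (innerθ θ (v - u) y)) :=
      (innerL θ (v - u)).contDiff.exp
    exact this.contDiffOn.smul h1
  · intro z hz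
    have hd : DifferentiableAt ℝ f z :=
      (h1.differentiableOn (by norm_num)).differentiableAt (hΩo.mem_nhds hz)
    have h := h2 z hz
    unfold Dlu at h ⊢
    rw [Dl_exp_smul θ _ f z hd, mul_smul_comm, ← smul_add, sub_mul]
    rw [show Dl θ f z + (v * f z - u * f z) + u * f z = Dl θ f z + v * f z by abel, h, smul_zero]
  · refine h3.congr_fun ?_ hΩo.measurableSet
    intro z _
    simp only [norm_smul, Real.norm_eq_abs, Real.abs_exp, mul_pow, innerθ_sub_left]
    rw [← Real.exp_nat_mul, mul_right_comm, ← Real.exp_add, mul_comm]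
    congr 2
    push_cast
    ring

/-- transfer of the reproducing kernel between the weighted Bergman spaces:
`K_v(z,ζ) = e^{⟨u−v,z+ζ⟩_θ} K_u(z,ζ)` reproduces `{}_{λ^θ_v}𝒜(Ω)`. -/
theorem statement10 (Ω : Set H4) (hΩo : IsOpen Ω) (hΩc : IsConnected Ω)
    (θ : ℝ) (hθ : θ ∈ Set.Ico 0 (2 * Real.pi)) (u v : H4) (Ku : H4 → H4 → H4)
    (hKu : ∀ f : H4 → H4, memLA θ u Ω f → ∀ z ∈ Ω,
      f z = ∫ ζ in Ω, Real.exp (2 * innerθ θ u ζ) • (Ku z ζ * f ζ)) :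
    ∀ f : H4 → H4, memLA θ v Ω f → ∀ z ∈ Ω,
      f z = ∫ ζ in Ω, Real.exp (2 * innerθ θ v ζ) •
        ((Real.exp (innerθ θ (u - v) (z + ζ)) • Ku z ζ) * f ζ) := by
  intro f hf z hz
  have h := hKu _ (memLA_transfer Ω hΩo θ u v f hf) z hz
  have h' : f z = Real.exp (innerθ θ (u - v) z) • (Real.exp (innerθ θ (v - u) z) • f z) := by
    rw [smul_smul, ← Real.exp_add, innerθ_sub_left, innerθ_sub_left]
    simp
  rw [h']
  refine (congrArg (fun t => Real.exp (innerθ θ (u - v) z) • t) h).trans ?_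
  rw [← integral_smul]
  congr 1
  funext ζ
  simp only [mul_smul_comm, smul_mul_assoc, smul_smul, ← Real.exp_add, innerθ_sub_left,
    innerθ_add_right]
  congr 2
  ring

end
end

section
/- Let Ω ⊆ ℍ be open, θ ∈ [0,2π), u ∈ ℍ, and let f : Ω → ℍ be of class C². Then $\overline{{}^θ_{\bar u}𝒟}\big({}^θ_u𝒟 f\big) = Δ_{ℝ⁴} f + |u|² f + \overline{{}^θ𝒟}(u f) + \bar u\,{}^θ𝒟 f$ on Ω. In particular, if u ∈ ℝ and ∂f/∂x₀ ≡ 0 on Ω, then $\overline{{}^θ_{\bar u}𝒟}\big({}^θ_u𝒟 f\big) = Δ_{ℝ⁴} f + u² f$, i.e., ${}^θ_u𝒟$ factorizes the Helmholtz operator with wave number u². -/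
open MeasureTheory

noncomputable section

/-- The conjugate left θ-Cauchy–Riemann operator. -/
def Dlbar (θ : ℝ) (f : H4 → H4) (z : H4) : H4 :=
  fderiv ℝ f z 1 - qI * fderiv ℝ f z qI - e2 θ * fderiv ℝ f z (e2 θ) -
    e3 θ * fderiv ℝ f z (e3 θ)

/-- The four-dimensional Laplacian in θ-coordinates. -/
def lap4 (θ : ℝ) (f : H4 → H4) (z : H4) : H4 :=
  fderiv ℝ (fun w => fderiv ℝ f w 1) z 1 +
    fderiv ℝ (fun w => fderiv ℝ f w qI) z qI +
    fderiv ℝ (fun w => fderiv ℝ f w (e2 θ)) z (e2 θ) +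
    fderiv ℝ (fun w => fderiv ℝ f w (e3 θ)) z (e3 θ)

/-- Quaternion with given components, as an element of `H4`. -/
def auxMk (a b c d : ℝ) : H4 := ⟨a, b, c, d⟩

lemma aux_mk_mul (a b c d a' b' c' d' : ℝ) : auxMk a b c d * auxMk a' b' c' d' =
    auxMk (a * a' - b * b' - c * c' - d * d') (a * b' + b * a' + c * d' - d * c')
      (a * c' - b * d' + c * a' + d * b') (a * d' + b * c' - c * b' + d * a') := by
  refine Quaternion.ext (R := ℝ) _ _ ?_ ?_ ?_ ?_
  · exact Quaternion.re_mul (auxMk a b c d) (auxMk a' b' c' d')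
  · exact Quaternion.imI_mul (auxMk a b c d) (auxMk a' b' c' d')
  · exact Quaternion.imJ_mul (auxMk a b c d) (auxMk a' b' c' d')
  · exact Quaternion.imK_mul (auxMk a b c d) (auxMk a' b' c' d')

lemma aux_neg_mk (a b c d : ℝ) : -(auxMk a b c d) = auxMk (-a) (-b) (-c) (-d) := rfl

lemma aux_one : (1 : H4) = auxMk 1 0 0 0 := rfl

lemma aux_qI : qI = auxMk 0 1 0 0 := rfl

lemma aux_qJ : qJ = auxMk 0 0 1 0 := rfl

lemma aux_eI (θ : ℝ) : eIθ θ = auxMk (Real.cos θ) (Real.sin θ) 0 0 := rfl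

lemma aux_qI_sq : qI * qI = -1 := by
  rw [aux_qI, aux_mk_mul, aux_one, aux_neg_mk]
  norm_num

lemma aux_e2 (θ : ℝ) : e2 θ = auxMk 0 0 (-Real.sin θ) (Real.cos θ) := by
  rw [e2, aux_qI, aux_qJ, aux_eI, aux_mk_mul, aux_mk_mul]
  norm_num

lemma aux_e3 (θ : ℝ) : e3 θ = auxMk 0 0 (Real.cos θ) (Real.sin θ) := by
  rw [e3, aux_qJ, aux_eI, aux_mk_mul]
  norm_num

lemma aux_e2_sq (θ : ℝ) : e2 θ * e2 θ = -1 := by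
  have h := Real.sin_sq_add_cos_sq θ
  rw [aux_e2, aux_mk_mul, aux_one, aux_neg_mk]
  congr 1 <;> linarith

lemma aux_e3_sq (θ : ℝ) : e3 θ * e3 θ = -1 := by
  have h := Real.sin_sq_add_cos_sq θ
  rw [aux_e3, aux_mk_mul, aux_one, aux_neg_mk]
  congr 1 <;> linarith

lemma aux_e2_qI (θ : ℝ) : e2 θ * qI = -(qI * e2 θ) := by
  rw [aux_e2, aux_qI, aux_mk_mul, aux_mk_mul, aux_neg_mk]
  congr 1 <;> ring

lemma aux_e3_qI (θ : ℝ) : e3 θ * qI = -(qI * e3 θ) := by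
  rw [aux_e3, aux_qI, aux_mk_mul, aux_mk_mul, aux_neg_mk]
  congr 1 <;> ring

lemma aux_e3_e2 (θ : ℝ) : e3 θ * e2 θ = -(e2 θ * e3 θ) := by
  rw [aux_e3, aux_e2, aux_mk_mul, aux_mk_mul, aux_neg_mk]
  congr 1 <;> ring

lemma aux_fderiv_const_mul (a : H4) (g : H4 → H4) (z v : H4) (hg : DifferentiableAt ℝ g z) :
    fderiv ℝ (fun w => a * g w) z v = a * fderiv ℝ g z v := by
  rw [fderiv_const_mul hg]
  simp

/-- Derivative of the operator `Dlu` in a direction `v`. -/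
lemma aux_fderiv_Dlu (θ : ℝ) (u : H4) (f : H4 → H4) (z v : H4)
    (h1 : DifferentiableAt ℝ f z) (h2 : DifferentiableAt ℝ (fderiv ℝ f) z) :
    fderiv ℝ (fun w => Dlu θ u f w) z v
      = fderiv ℝ (fderiv ℝ f) z v 1 + qI * fderiv ℝ (fderiv ℝ f) z v qI
        + e2 θ * fderiv ℝ (fderiv ℝ f) z v (e2 θ) + e3 θ * fderiv ℝ (fderiv ℝ f) z v (e3 θ)
        + u * fderiv ℝ f z v := by
  have ha : ∀ a : H4, HasFDerivAt (fun w => fderiv ℝ f w a)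
      ((fderiv ℝ (fderiv ℝ f) z).flip a) z := by
    intro a
    have := h2.hasFDerivAt.clm_apply (hasFDerivAt_const a z)
    refine this.congr_fderiv ?_
    ext1 w
    simp
  have H := ((((ha 1).add ((ha qI).const_mul qI)).add ((ha (e2 θ)).const_mul (e2 θ))).add
    ((ha (e3 θ)).const_mul (e3 θ))).add (h1.hasFDerivAt.const_mul u)
  have H' : HasFDerivAt (fun w => Dlu θ u f w) _ z := H
  rw [H'.fderiv]
  simp

lemma aux_fderiv2 (f : H4 → H4) (z a v : H4) (h2 : DifferentiableAt ℝ (fderiv ℝ f) z) :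
    fderiv ℝ (fun w => fderiv ℝ f w a) z v = fderiv ℝ (fderiv ℝ f) z v a := by
  have := h2.hasFDerivAt.clm_apply (hasFDerivAt_const a z)
  rw [this.fderiv]
  simp

/-- The purely algebraic part of the factorization. -/
lemma aux_alg (θ : ℝ) (B : H4 → H4 → H4) (hB : ∀ v w, B v w = B w v) :
    (B 1 1 + qI * B 1 qI + e2 θ * B 1 (e2 θ) + e3 θ * B 1 (e3 θ))
      - qI * (B qI 1 + qI * B qI qI + e2 θ * B qI (e2 θ) + e3 θ * B qI (e3 θ))
      - e2 θ * (B (e2 θ) 1 + qI * B (e2 θ) qI + e2 θ * B (e2 θ) (e2 θ)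
          + e3 θ * B (e2 θ) (e3 θ))
      - e3 θ * (B (e3 θ) 1 + qI * B (e3 θ) qI + e2 θ * B (e3 θ) (e2 θ)
          + e3 θ * B (e3 θ) (e3 θ))
      = B 1 1 + B qI qI + B (e2 θ) (e2 θ) + B (e3 θ) (e3 θ) := by
  rw [hB qI 1, hB (e2 θ) 1, hB (e3 θ) 1, hB (e2 θ) qI, hB (e3 θ) qI, hB (e3 θ) (e2 θ)]
  simp only [mul_add, ← mul_assoc, aux_qI_sq, aux_e2_sq, aux_e3_sq, aux_e2_qI, aux_e3_qI,
    aux_e3_e2, neg_mul, one_mul]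
  abel

lemma aux_star_mul (u : H4) (x : H4) : star u * (u * x) = (‖u‖ ^ 2 : ℝ) • x := by
  rw [← mul_assoc, Quaternion.star_mul_self, Quaternion.normSq_eq_norm_mul_self, ← pow_two,
    Quaternion.coe_mul_eq_smul]

/-- `conj({}^θ_{ū}𝒟)({}^θ_u𝒟 f) = Δf + |u|²f + conj({}^θ𝒟)(uf) + ū {}^θ𝒟 f`;
in particular for real u and f independent of x₀ this is `Δf + u²f`. -/
theorem statement19 (Ω : Set H4) (hΩ : IsOpen Ω) (θ : ℝ) (hθ : θ ∈ Set.Ico 0 (2 * Real.pi))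
    (u : H4) (f : H4 → H4) (hf : ContDiffOn ℝ 2 f Ω) :
    (∀ z ∈ Ω,
      Dlbar θ (fun w => Dlu θ u f w) z + star u * Dlu θ u f z
        = lap4 θ f z + (‖u‖ ^ 2 : ℝ) • f z +
            (Dlbar θ (fun w => u * f w) z + star u * Dl θ f z)) ∧
    (∀ r : ℝ, u = (r : H4) → (∀ z ∈ Ω, fderiv ℝ f z 1 = 0) →
      ∀ z ∈ Ω,
        Dlbar θ (fun w => Dlu θ u f w) z + star u * Dlu θ u f z
          = lap4 θ f z + (r ^ 2 : ℝ) • f z) := by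
  have part1 : ∀ z ∈ Ω,
      Dlbar θ (fun w => Dlu θ u f w) z + star u * Dlu θ u f z
        = lap4 θ f z + (‖u‖ ^ 2 : ℝ) • f z +
            (Dlbar θ (fun w => u * f w) z + star u * Dl θ f z) := by
    intro z hz
    have hc : ContDiffAt ℝ 2 f z := hf.contDiffAt (hΩ.mem_nhds hz)
    have h1 : DifferentiableAt ℝ f z := hc.differentiableAt (by norm_num)
    have h2 : DifferentiableAt ℝ (fderiv ℝ f) z :=
      (hc.fderiv_right (m := 1) (by norm_num)).differentiableAt (by norm_num)
    have hs : IsSymmSndFDerivAt ℝ f z := hc.isSymmSndFDerivAt (by simp)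
    have key := aux_alg θ (fun v w => fderiv ℝ (fderiv ℝ f) z v w) (fun v w => hs v w)
    have hu := aux_star_mul u (f z)
    simp only [Dlbar, lap4, aux_fderiv_Dlu θ u f z _ h1 h2, aux_fderiv2 f z _ _ h2,
      aux_fderiv_const_mul u f z _ h1]
    rw [← key, ← hu]
    simp only [Dlu]
    noncomm_ring
  refine ⟨part1, ?_⟩
  intro r hr h0 z hz
  rw [part1 z hz]
  have hc : ContDiffAt ℝ 2 f z := hf.contDiffAt (hΩ.mem_nhds hz)
  have h1 : DifferentiableAt ℝ f z := hc.differentiableAt (by norm_num)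
  have hn : (‖u‖ ^ 2 : ℝ) = r ^ 2 := by
    rw [hr, Quaternion.norm_coe, Real.norm_eq_abs, sq_abs]
  have hst : star u = u := by rw [hr, Quaternion.star_coe]
  have hcm : ∀ x : H4, x * u = u * x := by
    intro x
    rw [hr]
    exact (Quaternion.coe_commutes r x).symm
  have hz0 : Dlbar θ (fun w => u * f w) z + star u * Dl θ f z = 0 := by
    rw [hst]
    simp only [Dlbar, Dl, aux_fderiv_const_mul u f z _ h1, h0 z hz, ← mul_assoc, hcm, mul_add,
      mul_zero]
    abel
  rw [hn, hz0, add_zero]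

end
end
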